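/- For every integer k ≥ 0, ∫_{−1}^{1} (2 − 2t)^{3/2} P_k''(t) dt = 8(−1)^k · binom(k+1, 2) + 3·(2(−1)^{k+1} + 2/(2k+1)). -/

import Mathlib

/-- `C` is the family of Gegenbauer (ultraspherical) polynomials with parameter `α`,
characterized by the generating function `(1 - 2rt + r²)^(-α) = Σ_k C_k^α(t) r^k`
for `t ∈ [-1, 1]` and `|r|` small. -/
def IsGegenbauer (α : ℝ) (C : ℕ → Polynomial ℝ) : Prop :=
  ∀ t ∈ Set.Icc (-1:ℝ) 1, ∀ r : ℝ, |r| < 1/2 →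
    HasSum (fun k : ℕ => (C k).eval t * r ^ k) ((1 - 2*r*t + r^2) ^ (-α))

/-- The Legendre polynomials are the Gegenbauer polynomials with parameter `1/2`. -/
def IsLegendre (P : ℕ → Polynomial ℝ) : Prop := IsGegenbauer (1/2) P

open Polynomial in
/-- Coefficient uniqueness for real power series converging near zero. -/
lemma coeff_unique (a b : ℕ → ℝ) (f : ℝ → ℝ)
    (ha : ∀ r : ℝ, |r| < 1/2 → HasSum (fun k => a k * r ^ k) (f r))
    (hb : ∀ r : ℝ, |r| < 1/2 → HasSum (fun k => b k * r ^ k) (f r)) : a = b := by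
  have key : ∀ c : ℕ → ℝ, (∀ r : ℝ, |r| < 1/2 → HasSum (fun k => c k * r ^ k) (f r)) →
      HasFPowerSeriesAt f (FormalMultilinearSeries.ofScalars ℝ c) 0 := by
    intro c hc
    rw [hasFPowerSeriesAt_iff]
    have : Metric.ball (0:ℝ) (1/2) ∈ nhds (0:ℝ) := Metric.ball_mem_nhds _ (by norm_num)
    filter_upwards [this] with z hz
    have hz' : |z| < 1/2 := by simpa using hz
    have := hc z hz'
    simpa [FormalMultilinearSeries.coeff_ofScalars, mul_comm] using this
  have h := (key a ha).eq_formalMultilinearSeries (key b hb)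
  funext n
  have := congrArg (fun p => FormalMultilinearSeries.coeff p n) h
  simpa [FormalMultilinearSeries.coeff_ofScalars] using this

/-- The formal generating series. -/
lemma gen_sq (P : ℕ → Polynomial ℝ) (hP : IsLegendre P) (t : ℝ) (ht : t ∈ Set.Icc (-1:ℝ) 1) :
    (PowerSeries.mk fun k => (P k).eval t) ^ 2 *
      (1 - PowerSeries.C (2 * t) * PowerSeries.X + PowerSeries.X ^ 2) = 1 := by
  set g : ℕ → ℝ := fun k => (P k).eval t with hg
  have hpos : ∀ r : ℝ, |r| < 1/2 → 0 < 1 - 2*r*t + r^2 := by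
    intro r hr
    have h1 := abs_lt.1 hr
    have ht2 : t^2 ≤ 1 := by nlinarith [ht.1, ht.2]
    nlinarith [sq_nonneg (t - r), abs_mul_abs_self r, abs_mul r t, le_abs_self (r*t), abs_le.2 ht,
      abs_nonneg r, abs_nonneg t, mul_le_mul_of_nonneg_left (abs_le.2 ht) (abs_nonneg r)]
  -- product of absolutely convergent real series
  have prod : ∀ (A B : PowerSeries ℝ) (r x y : ℝ), 
      HasSum (fun k => PowerSeries.coeff k A * r ^ k) x → 
      HasSum (fun k => PowerSeries.coeff k B * r ^ k) y →
      HasSum (fun k => PowerSeries.coeff k (A * B) * r ^ k) (x * y) := by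
    intro A B r x y hx hy
    have hx' : Summable fun k => ‖PowerSeries.coeff k A * r ^ k‖ := hx.summable.norm
    have hy' : Summable fun k => ‖PowerSeries.coeff k B * r ^ k‖ := hy.summable.norm
    have hs := (summable_norm_sum_mul_antidiagonal_of_summable_norm hx' hy').of_norm.hasSum
    rw [← tsum_mul_tsum_eq_tsum_sum_antidiagonal_of_summable_norm hx' hy', hx.tsum_eq, hy.tsum_eq]
      at hs
    refine Eq.mp (congrArg (fun f => HasSum f (x * y)) (funext fun k => ?_)) hs
    symm
    rw [PowerSeries.coeff_mul, Finset.sum_mul]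
    refine Finset.sum_congr rfl fun p hp => ?_
    rw [← Finset.HasAntidiagonal.mem_antidiagonal.1 hp, pow_add]; ring
  have hW : ∀ r : ℝ, HasSum (fun k => PowerSeries.coeff k
      (1 - PowerSeries.C (2 * t) * PowerSeries.X + PowerSeries.X ^ 2 : PowerSeries ℝ) * r ^ k)
      (1 - 2*r*t + r^2) := by
    intro r
    have := hasSum_sum_of_ne_finset_zero (L := SummationFilter.unconditional ℕ) (f := fun k => PowerSeries.coeff k
      (1 - PowerSeries.C (2 * t) * PowerSeries.X + PowerSeries.X ^ 2 : PowerSeries ℝ) * r ^ k)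
      (s := Finset.range 3) (by
        intro b hb
        have hb : 3 ≤ b := by simpa using hb
        have h0 : b ≠ 0 := by omega
        have h1 : b ≠ 1 := by omega
        have h2 : b ≠ 2 := by omega
        simp [-map_mul, PowerSeries.coeff_one, PowerSeries.coeff_X, PowerSeries.coeff_X_pow, h0, h1, h2])
    convert this using 1
    simp [-map_mul, Finset.sum_range_succ, PowerSeries.coeff_one, PowerSeries.coeff_X,
      PowerSeries.coeff_X_pow]
    ring
  have hF : ∀ r : ℝ, |r| < 1/2 → HasSum (fun k => PowerSeries.coeff k (PowerSeries.mk g) * r ^ k)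
      ((1 - 2*r*t + r^2) ^ (-(1/2:ℝ))) := by
    intro r hr
    simpa [hg] using hP t ht r hr
  have hone : ∀ r : ℝ, HasSum (fun k => PowerSeries.coeff k (1 : PowerSeries ℝ) * r ^ k) 1 := by
    intro r
    have := hasSum_ite_eq 0 (1:ℝ)
    convert this using 2 with k
    by_cases hk : k = 0 <;> simp [PowerSeries.coeff_one, hk]
  have := coeff_unique _ _ (fun _ => 1) (fun r hr => by
    have := prod _ _ r _ _ (prod _ _ r _ _ (hF r hr) (hF r hr)) (hW r)
    rw [← pow_two, ← pow_two] at this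
    convert this using 1
    have h := hpos r hr
    rw [← Real.rpow_natCast, ← Real.rpow_mul h.le]
    norm_num
    rw [Real.rpow_neg_one]
    exact (inv_mul_cancel₀ h.ne').symm) (fun r _ => hone r)
  ext k
  exact congrFun this k

lemma rec_eval (P : ℕ → Polynomial ℝ) (hP : IsLegendre P) (t : ℝ) (ht : t ∈ Set.Icc (-1:ℝ) 1) :
    (P 0).eval t = 1 ∧ (P 1).eval t = t ∧ ∀ n : ℕ, ((n:ℝ)+2) * (P (n+2)).eval t =
      (2*n+3) * t * (P (n+1)).eval t - (n+1) * (P n).eval t := by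
  have h := gen_sq P hP t ht
  set F : PowerSeries ℝ := PowerSeries.mk fun k => (P k).eval t with hFd
  have hc : ∀ k, PowerSeries.coeff k F = (P k).eval t := fun k => by simp [hFd]
  have hF0 : F ≠ 0 := by
    rintro h0
    rw [h0] at h
    simp at h
  have h0 : (P 0).eval t = 1 := by
    have := hP t ht 0 (by norm_num)
    have h2 := hasSum_ite_eq 0 ((P 0).eval t)
    have h3 : (fun k : ℕ => (P k).eval t * (0:ℝ)^k) = fun k => if k = 0 then (P 0).eval t else 0 := by
      funext k
      by_cases hk : k = 0 <;> simp [hk]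
    rw [h3] at this
    simpa using h2.unique this
  have hd := congrArg (PowerSeries.derivative ℝ) h
  have hd2 : F * (2 * PowerSeries.derivative ℝ F *
      (1 - PowerSeries.C (2 * t) * PowerSeries.X + PowerSeries.X ^ 2)
      + F * (2 * PowerSeries.X - PowerSeries.C (2*t))) = 0 := by
    have e : PowerSeries.derivative ℝ
      (1 - PowerSeries.C (2 * t) * PowerSeries.X + PowerSeries.X ^ 2 : PowerSeries ℝ) =
       (2 * PowerSeries.X - PowerSeries.C (2*t)) := by
      simp [Derivation.leibniz, pow_two, PowerSeries.derivative_C, PowerSeries.derivative_X]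
      ring
    rw [Derivation.leibniz, e, pow_two F, Derivation.leibniz] at hd
    simp only [smul_eq_mul, Derivation.map_one_eq_zero] at hd
    linear_combination hd
  have hd3 := (mul_eq_zero.1 hd2).resolve_left hF0
  set D := PowerSeries.derivative ℝ F with hD
  have hDc : ∀ k, PowerSeries.coeff k D = (P (k+1)).eval t * (k+1) := fun k => by
    rw [hD, PowerSeries.coeff_derivative, hc]
  have hd4 : PowerSeries.C 2 * D - PowerSeries.C (4*t) * (PowerSeries.X * D)
      + PowerSeries.C 2 * (PowerSeries.X * (PowerSeries.X * D))
      + PowerSeries.C 2 * (PowerSeries.X * F) - PowerSeries.C (2*t) * F = 0 := by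
    have e4 : (PowerSeries.C (4*t) : PowerSeries ℝ) = 2 * PowerSeries.C (2*t) := by
      rw [show (4*t) = 2 * (2*t) by ring, map_mul]; congr 1
    have e2 : (PowerSeries.C 2 : PowerSeries ℝ) = 2 := map_ofNat _ 2
    rw [e4, e2]
    linear_combination hd3
  refine ⟨h0, ?_, ?_⟩
  · have := congrArg (PowerSeries.coeff 0) hd4
    simp only [map_sub, map_add, PowerSeries.coeff_C_mul, PowerSeries.coeff_zero_X_mul, hc, hDc,
      map_zero] at this
    norm_num at this
    rw [h0] at this
    linarith
  · intro n
    have := congrArg (PowerSeries.coeff (n+1)) hd4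
    rcases n with _ | n
    · simp [-map_mul, hc, hDc, PowerSeries.coeff_succ_X_mul] at this
      simp
      have e := PowerSeries.coeff_succ_X_mul (R := ℝ) 0 (PowerSeries.X * D)
      simp at e
      try rw [e] at this
      try norm_num at this
      linarith
    · simp [-map_mul, hc, hDc, PowerSeries.coeff_succ_X_mul] at this
      push_cast
      linarith

open Polynomial in
lemma rec_poly (P : ℕ → Polynomial ℝ) (hP : IsLegendre P) :
    P 0 = 1 ∧ P 1 = X ∧ ∀ n : ℕ, ((n:ℝ[X])+2) * P (n+2) =
      (2*(n:ℝ[X])+3) * X * P (n+1) - ((n:ℝ[X])+1) * P n := by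
  have hinf : (Set.Icc (-1:ℝ) 1).Infinite := Set.Icc_infinite (by norm_num)
  have key : ∀ p q : ℝ[X], (∀ t ∈ Set.Icc (-1:ℝ) 1, p.eval t = q.eval t) → p = q := by
    intro p q h
    exact Polynomial.eq_of_infinite_eval_eq p q (hinf.mono h)
  refine ⟨key _ _ fun t ht => ?_, key _ _ fun t ht => ?_, fun n => key _ _ fun t ht => ?_⟩
  · simpa using (rec_eval P hP t ht).1
  · simpa using (rec_eval P hP t ht).2.1
  · simpa using (rec_eval P hP t ht).2.2 n

open Polynomial in
lemma deriv_ids (P : ℕ → Polynomial ℝ) (hP : IsLegendre P) (n : ℕ) :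
    derivative (P (n+1)) = X * derivative (P n) + ((n:ℝ[X])+1) * P n ∧
    X * derivative (P (n+1)) - derivative (P n) = ((n:ℝ[X])+1) * P (n+1) := by
  obtain ⟨h0, h1, hr⟩ := rec_poly P hP
  induction n with
  | zero => simp [h0, h1]
  | succ n ih =>
    obtain ⟨hA, hB⟩ := ih
    have hd := congrArg derivative (hr n)
    simp at hd
    have hne : ((n:ℝ[X])+2) ≠ 0 := by
      have : ((n+2 : ℕ) : ℝ[X]) ≠ 0 := Nat.cast_ne_zero.2 (by omega)
      simpa using this
    have A : derivative (P (n+1+1)) = X * derivative (P (n+1)) + ((n:ℝ[X])+2) * P (n+1) := by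
      apply mul_left_cancel₀ hne
      linear_combination hd + ((n:ℝ[X])+1) * hB
    refine ⟨by push_cast; linear_combination A, ?_⟩
    push_cast
    linear_combination X * A - hr n + X * hB - hA

open Polynomial in
lemma key_id (P : ℕ → Polynomial ℝ) (hP : IsLegendre P) (n : ℕ) :
    (1 - X) * derivative (P n + P (n+1)) = ((n:ℝ[X])+1) * (P n - P (n+1)) := by
  obtain ⟨hA, hB⟩ := deriv_ids P hP n
  rw [derivative_add]
  linear_combination hA - hB

lemma eval_neg_one (P : ℕ → Polynomial ℝ) (hP : IsLegendre P) (n : ℕ) :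
    (P n).eval (-1) = (-1)^n ∧ (P (n+1)).eval (-1) = (-1)^(n+1) := by
  obtain ⟨h0, h1, hr⟩ := rec_eval P hP (-1) (by norm_num)
  induction n with
  | zero => simp [h0, h1]
  | succ n ih =>
    refine ⟨ih.2, ?_⟩
    have hne : ((n:ℝ)+2) ≠ 0 := by positivity
    apply mul_left_cancel₀ hne
    have := hr n
    rw [ih.1, ih.2] at this
    rw [this]
    ring

open Polynomial in
lemma deriv_neg_one (P : ℕ → Polynomial ℝ) (hP : IsLegendre P) (n : ℕ) :
    (derivative (P n)).eval (-1) = -(-1)^n * (n * (n+1) / 2) := by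
  induction n with
  | zero => simp [(rec_poly P hP).1]
  | succ n ih =>
    have := congrArg (eval (-1)) (key_id P hP n)
    simp [(eval_neg_one P hP n).1, (eval_neg_one P hP n).2, ih] at this
    push_cast
    rw [pow_succ] at this ⊢
    linarith

lemma w_int : IntervalIntegrable (fun t : ℝ => (2 - 2*t) ^ (-(1/2):ℝ)) MeasureTheory.volume (-1) 1 := by
  have h : IntervalIntegrable (fun x : ℝ => x ^ (-(1/2):ℝ)) MeasureTheory.volume 0 4 :=
    intervalIntegral.intervalIntegrable_rpow' (by norm_num)
  have h1 := (h.comp_sub_left 2).comp_mul_left (c := 2)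
  norm_num at h1
  have := h1.symm
  norm_num
  exact this

lemma wQ_int (Q : Polynomial ℝ) : IntervalIntegrable
    (fun t : ℝ => (2 - 2*t) ^ (-(1/2):ℝ) * Q.eval t) MeasureTheory.volume (-1) 1 :=
  w_int.mul_continuousOn Q.continuous.continuousOn

open Polynomial in
lemma ftc (Q : Polynomial ℝ) : ∫ t in (-1:ℝ)..1, (2 - 2*t) ^ (-(1/2):ℝ) *
    ((2 - 2 * X) * derivative Q - Q).eval t = -2 * Q.eval (-1) := by
  have h := intervalIntegral.integral_eq_sub_of_hasDeriv_right_of_le (a := -1) (b := 1)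
    (f := fun t : ℝ => (2 - 2*t) ^ ((1/2):ℝ) * Q.eval t)
    (f' := fun t : ℝ => (2 - 2*t) ^ (-(1/2):ℝ) * ((2 - 2 * X) * derivative Q - Q).eval t)
    (by norm_num) ?_ ?_ (wQ_int _)
  · rw [h]
    have e4 : ((4:ℝ)) ^ ((1:ℝ)/2) = 2 := by
      rw [← Real.sqrt_eq_rpow, show (4:ℝ) = 2^2 by norm_num]; simp
    norm_num [e4]
  · refine ContinuousOn.mul (ContinuousOn.rpow_const (by fun_prop) ?_) Q.continuous.continuousOn
    intros; right; norm_num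
  · intro t ht
    have hp : 0 < 2 - 2*t := by linarith [ht.2]
    have h1 : HasDerivAt (fun t : ℝ => 2 - 2*t) (-2) t := by
      simpa using ((hasDerivAt_id t).const_mul 2).const_sub 2
    have h2 := (h1.rpow_const (p := 1/2) (Or.inl hp.ne')).mul (Q.hasDerivAt t)
    refine HasDerivAt.hasDerivWithinAt (h2.congr_deriv ?_)
    have e : (2 - 2*t) ^ ((1:ℝ)/2) = (2 - 2*t) ^ (-(1/2):ℝ) * (2 - 2*t) := by
      rw [← Real.rpow_add_one hp.ne']; norm_num
    rw [e, show (1:ℝ)/2 - 1 = -(1/2) by norm_num]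
    simp
    ring

lemma J_val (P : ℕ → Polynomial ℝ) (hP : IsLegendre P) (n : ℕ) :
    ∫ t in (-1:ℝ)..1, (2 - 2*t) ^ (-(1/2):ℝ) * (P n).eval t = 2 / (2 * n + 1) := by
  induction n with
  | zero =>
    have := ftc (-1)
    rw [(rec_poly P hP).1]
    simpa using this
  | succ n ih =>
    have h := ftc (P n + P (n+1))
    have e : (2 - 2 * Polynomial.X) * Polynomial.derivative (P n + P (n+1)) - (P n + P (n+1))
        = Polynomial.C (2*(n:ℝ)+1) * P n - Polynomial.C (2*(n:ℝ)+3) * P (n+1) := by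
      have := key_id P hP n
      simp only [map_add, map_mul, map_natCast, map_ofNat, map_one] at this ⊢
      linear_combination 2 * this
    rw [e, Polynomial.eval_add, (eval_neg_one P hP n).1, (eval_neg_one P hP n).2] at h
    have e2 : (fun t : ℝ => (2 - 2*t) ^ (-(1/2):ℝ) * (Polynomial.C (2*(n:ℝ)+1) * P n -
        Polynomial.C (2*(n:ℝ)+3) * P (n+1)).eval t) = fun t : ℝ =>
        (2*(n:ℝ)+1) * ((2 - 2*t) ^ (-(1/2):ℝ) * (P n).eval t) -
        (2*(n:ℝ)+3) * ((2 - 2*t) ^ (-(1/2):ℝ) * (P (n+1)).eval t) := by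
      funext t
      rw [Polynomial.eval_sub, Polynomial.eval_mul, Polynomial.eval_mul, Polynomial.eval_C,
        Polynomial.eval_C]
      ring
    rw [e2, intervalIntegral.integral_sub ((wQ_int _).const_mul _) ((wQ_int _).const_mul _),
      intervalIntegral.integral_const_mul, intervalIntegral.integral_const_mul, ih] at h
    push_cast
    have h1 : (2*(n:ℝ)+1) ≠ 0 := by positivity
    have h3 : (2*((n:ℝ)+1)+1) ≠ 0 := by positivity
    rw [eq_div_iff h3]
    rw [mul_div_cancel₀ _ h1] at h
    rw [pow_succ] at h
    linarith

theorem legendre_second_deriv_weighted_integral (P : ℕ → Polynomial ℝ) (hP : IsLegendre P)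
    (k : ℕ) :
    ∫ t in (-1:ℝ)..1,
        (2 - 2*t) ^ ((3:ℝ)/2) * (Polynomial.derivative (Polynomial.derivative (P k))).eval t =
      8 * (-1 : ℝ) ^ k * ((k + 1).choose 2 : ℝ) +
        3 * (2 * (-1 : ℝ) ^ (k + 1) + 2 / (2 * (k : ℝ) + 1)) := by
  have h := ftc ((2 - 2 * Polynomial.X) * Polynomial.derivative (P k) + 3 * P k)
  have e : (2 - 2 * Polynomial.X) * Polynomial.derivative
      ((2 - 2 * Polynomial.X) * Polynomial.derivative (P k) + 3 * P k)
      - ((2 - 2 * Polynomial.X) * Polynomial.derivative (P k) + 3 * P k) =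
      (2 - 2 * Polynomial.X)^2 * Polynomial.derivative (Polynomial.derivative (P k))
        - Polynomial.C 3 * P k := by
    have e3 : (Polynomial.C 3 : Polynomial ℝ) = 3 := map_ofNat _ 3
    rw [e3]
    simp
    ring
  rw [e] at h
  have e2 : Set.EqOn (fun t : ℝ => (2 - 2*t) ^ (-(1/2):ℝ) * ((2 - 2 * Polynomial.X)^2 *
      Polynomial.derivative (Polynomial.derivative (P k)) - Polynomial.C 3 * P k).eval t)
      (fun t : ℝ => (2 - 2*t) ^ ((3:ℝ)/2) *
        (Polynomial.derivative (Polynomial.derivative (P k))).eval t -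
        3 * ((2 - 2*t) ^ (-(1/2):ℝ) * (P k).eval t)) (Set.uIcc (-1) 1) := by
    intro t ht
    rw [Set.uIcc_of_le (by norm_num)] at ht
    have e3 : (2 - 2*t) ^ ((3:ℝ)/2) = (2 - 2*t) ^ (-(1/2):ℝ) * (2 - 2*t)^2 := by
      rcases eq_or_lt_of_le ht.2 with h1 | h1
      · rw [h1]; norm_num
      · have hp : 0 < 2 - 2*t := by linarith
        rw [← Real.rpow_natCast, ← Real.rpow_add hp]; norm_num
    simp only [e3, Polynomial.eval_sub, Polynomial.eval_mul, Polynomial.eval_C,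
      Polynomial.eval_pow, Polynomial.eval_X, Polynomial.eval_ofNat]
    ring
  have hi : IntervalIntegrable (fun t : ℝ => (2 - 2*t) ^ ((3:ℝ)/2) *
        (Polynomial.derivative (Polynomial.derivative (P k))).eval t)
        MeasureTheory.volume (-1) 1 := by
    apply Continuous.intervalIntegrable
    refine Continuous.mul (Continuous.rpow_const (by fun_prop) ?_) (Polynomial.continuous _)
    intros; right; norm_num
  rw [intervalIntegral.integral_congr e2, intervalIntegral.integral_sub hi
    ((wQ_int _).const_mul _), intervalIntegral.integral_const_mul, J_val P hP] at h
  simp only [Polynomial.eval_add, Polynomial.eval_sub, Polynomial.eval_mul, Polynomial.eval_X,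
    Polynomial.eval_ofNat, deriv_neg_one P hP, (eval_neg_one P hP k).1] at h
  rw [Nat.cast_choose_two, pow_succ]
  push_cast
  linear_combination h
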